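/- Let n ≥ 1 and n/(n+1) < q ≤ 1, fix ψ as in the context, and let c > 0. There is a constant C = C(n,q,c,ψ) with the following property: whenever B ⊆ ℝⁿ is a ball of radius r, K ⊆ B is a compact set with cap_q(K; 2B) ≥ c·r^{n−q}, u : ℝⁿ → ℝ is smooth with compact support and u vanishes on K, and g is a Hajlasz gradient of u on ℝⁿ, then |u(x)| ≤ C · r · ( M(g^q)(x) )^{1/q} for every x in the closed ball cl(B). -/

import Mathlib

open MeasureTheory Metric Set ENNReal NNReal

noncomputable section

/-- `g` is a Hajlasz gradient of `u` on `U ⊆ ℝⁿ`: `g` is measurable, nonnegative, and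
off a set of measure zero `|u x - u y| ≤ ‖x - y‖ (g x + g y)` for `x, y ∈ U`. -/
def IsHajlaszGradientOn (n : ℕ) (u g : EuclideanSpace ℝ (Fin n) → ℝ)
    (U : Set (EuclideanSpace ℝ (Fin n))) : Prop :=
  Measurable g ∧ (∀ x, 0 ≤ g x) ∧
    ∃ E : Set (EuclideanSpace ℝ (Fin n)), MeasureTheory.volume E = 0 ∧
      ∀ x ∈ U \ E, ∀ y ∈ U \ E, |u x - u y| ≤ ‖x - y‖ * (g x + g y)

/-- The partial derivative `∂_j φ` in the `j`-th coordinate direction. -/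
def pderivIdx (n : ℕ) (j : Fin n) (φ : EuclideanSpace ℝ (Fin n) → ℝ)
    (x : EuclideanSpace ℝ (Fin n)) : ℝ :=
  fderiv ℝ φ x (EuclideanSpace.single j 1)

/-- `sup_{t>0} |(∂_j u) * ψ_t|(x)`, the smooth maximal function of the partial
derivative of a differentiable function `u`, where `ψ_t(z) = t^{-n} ψ(z/t)`. -/
def convMax (n : ℕ) (ψ u : EuclideanSpace ℝ (Fin n) → ℝ) (j : Fin n)
    (x : EuclideanSpace ℝ (Fin n)) : ℝ≥0∞ :=
  ⨆ (t : {s : ℝ // 0 < s}),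
    ENNReal.ofReal |∫ y, pderivIdx n j u y * ((t.1⁻¹) ^ n * ψ (t.1⁻¹ • (x - y)))|

/-- The Hardy–Littlewood maximal function, with values in `[0,∞]`. -/
def hlMax (n : ℕ) (h : EuclideanSpace ℝ (Fin n) → ℝ)
    (x : EuclideanSpace ℝ (Fin n)) : ℝ≥0∞ :=
  ⨆ (r : {s : ℝ // 0 < s}),
    (volume (ball x r.1))⁻¹ * ∫⁻ y in ball x r.1, ENNReal.ofReal |h y|

/-- The Hardy `q`-capacity of `K` relative to `U`:
`cap_q(K;U) = inf { Σ_j ‖sup_{t>0} |(∂_jφ) * ψ_t|‖_{L^q}^q : φ ∈ C_0^∞(U), φ ≥ 1 on K }`. -/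
def hardyCap (n : ℕ) (ψ : EuclideanSpace ℝ (Fin n) → ℝ) (q : ℝ)
    (K U : Set (EuclideanSpace ℝ (Fin n))) : ℝ≥0∞ :=
  sInf {r : ℝ≥0∞ | ∃ φ : EuclideanSpace ℝ (Fin n) → ℝ,
    ContDiff ℝ (⊤ : ℕ∞) φ ∧ HasCompactSupport φ ∧ tsupport φ ⊆ U ∧ (∀ x ∈ K, 1 ≤ φ x) ∧
    r = ∑ j : Fin n, ∫⁻ x, convMax n ψ φ j x ^ q}

lemma vol_ball_eq (n : ℕ) (x : EuclideanSpace ℝ (Fin n)) {r : ℝ} (hr : 0 < r) :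
    volume (ball x r) = ENNReal.ofReal (r ^ n) * volume (ball (0 : EuclideanSpace ℝ (Fin n)) 1) := by
  have := Measure.addHaar_ball_of_pos (volume : Measure (EuclideanSpace ℝ (Fin n))) x hr
  rwa [finrank_euclideanSpace_fin] at this

lemma vol_closedBall_eq (n : ℕ) (x : EuclideanSpace ℝ (Fin n)) {r : ℝ} (hr : 0 < r) :
    volume (closedBall x r) =
      ENNReal.ofReal (r ^ n) * volume (ball (0 : EuclideanSpace ℝ (Fin n)) 1) := by
  have := Measure.addHaar_closedBall (volume : Measure (EuclideanSpace ℝ (Fin n))) x hr.le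
  rwa [finrank_euclideanSpace_fin] at this

lemma vol_unit_pos (n : ℕ) : 0 < volume (ball (0 : EuclideanSpace ℝ (Fin n)) 1) :=
  measure_ball_pos _ _ one_pos

lemma vol_unit_fin (n : ℕ) : volume (ball (0 : EuclideanSpace ℝ (Fin n)) 1) ≠ ∞ :=
  measure_ball_lt_top.ne

/-- Weak type (1,1) inequality. -/
lemma weak_type (n : ℕ) (hn : 1 ≤ n) (f : EuclideanSpace ℝ (Fin n) → ℝ≥0∞)
    (l : ℝ) (hl : 0 < l) (S : Set (EuclideanSpace ℝ (Fin n)))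
    (hS : ∀ x ∈ S, ∃ ρ : ℝ, 0 < ρ ∧
      ENNReal.ofReal l * volume (ball x ρ) ≤ ∫⁻ y in ball x ρ, f y) :
    ENNReal.ofReal l * volume S ≤ ENNReal.ofReal (5 ^ n) * ∫⁻ y, f y := by
  by_cases hI : ∫⁻ y, f y = ∞
  · rw [hI, ENNReal.mul_top]
    · exact le_top
    · simp
  choose! ρ hρ hρf using hS
  set V := volume (ball (0 : EuclideanSpace ℝ (Fin n)) 1) with hV
  have hV0 : V ≠ 0 := (vol_unit_pos n).ne'
  have hVt : V ≠ ∞ := vol_unit_fin n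
  -- radii bounded
  have hbd : ∀ x ∈ S, ρ x ≤ max 1 ((∫⁻ y, f y).toReal / (l * V.toReal)) := by
    intro x hx
    by_contra! hcon
    obtain ⟨h1, h2⟩ := max_lt_iff.1 hcon
    have h3 := (hρf x hx).trans (setLIntegral_le_lintegral _ _)
    rw [vol_ball_eq n x (hρ x hx), ← hV] at h3
    have h4 := ENNReal.toReal_mono hI h3
    rw [ENNReal.toReal_mul, ENNReal.toReal_mul, ENNReal.toReal_ofReal hl.le,
      ENNReal.toReal_ofReal (pow_nonneg (hρ x hx).le n)] at h4
    have hVp : 0 < V.toReal := ENNReal.toReal_pos hV0 hVt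
    have h5 : ρ x ≤ ρ x ^ n := le_self_pow₀ h1.le (by omega)
    rw [div_lt_iff₀ (by positivity)] at h2
    have : ρ x * (l * V.toReal) ≤ ρ x ^ n * (l * V.toReal) := by gcongr
    linarith
  obtain ⟨u, huS, hdisj, hcov⟩ :=
    Vitali.exists_disjoint_subfamily_covering_enlargement_closedBall S
      (fun x => x) ρ _ hbd 5 (by norm_num)
  have hcount : u.Countable := hdisj.countable_of_nonempty_interior (by
    intro i hi
    exact ⟨i, ball_subset_interior_closedBall (mem_ball_self (hρ i (huS hi)))⟩)
  have hsub : S ⊆ ⋃ b ∈ u, closedBall b (5 * ρ b) := by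
    intro a ha
    obtain ⟨b, hb, hab⟩ := hcov a ha
    exact mem_biUnion hb (hab (mem_closedBall_self (hρ a ha).le))
  calc ENNReal.ofReal l * volume S
      ≤ ENNReal.ofReal l * ∑' b : u, volume (closedBall (b : EuclideanSpace ℝ (Fin n)) (5 * ρ b)) := by
        gcongr
        exact (measure_mono hsub).trans (measure_biUnion_le _ hcount _)
    _ = ∑' b : u, ENNReal.ofReal l *
          volume (closedBall (b : EuclideanSpace ℝ (Fin n)) (5 * ρ b)) := by
        rw [ENNReal.tsum_mul_left]
    _ ≤ ∑' b : u, ENNReal.ofReal (5 ^ n) * ∫⁻ y in ball (b : EuclideanSpace ℝ (Fin n)) (ρ b), f y := by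
        apply ENNReal.tsum_le_tsum
        intro b
        have hp := hρ b (huS b.2)
        rw [vol_closedBall_eq n _ (by positivity), mul_pow, ENNReal.ofReal_mul (by positivity)]
        have := hρf b (huS b.2)
        rw [vol_ball_eq n _ hp] at this
        calc _ = ENNReal.ofReal (5 ^ n) * (ENNReal.ofReal l * (ENNReal.ofReal (ρ b ^ n) * volume (ball (0 : EuclideanSpace ℝ (Fin n)) 1))) := by ring
          _ ≤ _ := by gcongr
    _ = ENNReal.ofReal (5 ^ n) * ∑' b : u, ∫⁻ y in ball (b : EuclideanSpace ℝ (Fin n)) (ρ b), f y := by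
        rw [ENNReal.tsum_mul_left]
    _ = ENNReal.ofReal (5 ^ n) * ∫⁻ y in ⋃ b ∈ u, ball b (ρ b), f y := by
        rw [lintegral_biUnion hcount (fun _ _ => measurableSet_ball)
          (hdisj.mono (fun _ => ball_subset_closedBall))]
    _ ≤ _ := by
        gcongr
        exact Measure.restrict_le_self

/-- Strong type inequality for the maximal function. -/
lemma strong_type (n : ℕ) (hn : 1 ≤ n) (p : ℝ) (hp : 1 < p) :
    ∃ C : ℝ, 0 < C ∧ ∀ f : EuclideanSpace ℝ (Fin n) → ℝ, Measurable f → (∀ x, 0 ≤ f x) →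
      ∫⁻ x, hlMax n f x ^ p ≤ ENNReal.ofReal C * ∫⁻ x, ENNReal.ofReal (f x ^ p) := by
  refine ⟨p * (5 ^ n * 2) * (2 ^ (p - 1) / (p - 1)),
    by have : 0 < p - 1 := by linarith
       positivity, ?_⟩
  intro f hf hf0
  have hp0 : 0 < p := by linarith
  have hp1 : 0 < p - 1 := by linarith
  rw [lintegral_eq_nnreal]
  refine iSup₂_le fun φ hφ => ?_
  -- the level set estimate
  have hlev : ∀ t ∈ Ioi (0 : ℝ), volume {a | t < (φ a : ℝ) ^ (1 / p)} * ENNReal.ofReal (t ^ (p - 1)) ≤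
      ENNReal.ofReal (5 ^ n * 2) *
        ∫⁻ y, (if t / 2 < f y then ENNReal.ofReal (f y) else 0) * ENNReal.ofReal (t ^ (p - 2)) := by
    intro t ht
    have ht : 0 < t := ht
    have hw := weak_type n hn (fun y => if t / 2 < f y then ENNReal.ofReal (f y) else 0) (t / 2)
      (by positivity) {a | t < (φ a : ℝ) ^ (1 / p)} (by
        intro x hx
        have h1 : ENNReal.ofReal t < hlMax n f x := by
          have hx : t < (φ x : ℝ) ^ (1 / p) := hx
          have h2 : ENNReal.ofReal t < (φ x : ℝ≥0∞) ^ (1 / p) := by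
            rw [← ENNReal.ofReal_coe_nnreal, ENNReal.ofReal_rpow_of_nonneg (by positivity) (by positivity)]
            exact (ENNReal.ofReal_lt_ofReal_iff (ht.trans hx)).2 hx
          refine h2.trans_le ?_
          rw [one_div]
          exact (ENNReal.rpow_inv_le_iff hp0).2 (hφ x)
        obtain ⟨⟨ρ, hρ⟩, h2⟩ := lt_iSup_iff.1 h1
        refine ⟨ρ, hρ, ?_⟩
        have hvt : volume (ball x ρ) ≠ ∞ := measure_ball_lt_top.ne
        have hv0 : volume (ball x ρ) ≠ 0 := (measure_ball_pos _ _ hρ).ne'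
        have h3 : ENNReal.ofReal t * volume (ball x ρ) ≤ ∫⁻ y in ball x ρ, ENNReal.ofReal |f y| := by
          have h4 := h2.le
          simp only at h4
          rw [mul_comm, ← div_eq_mul_inv, ENNReal.le_div_iff_mul_le (Or.inl hv0) (Or.inl hvt)] at h4
          exact h4
        have h5 : ∫⁻ y in ball x ρ, ENNReal.ofReal |f y| ≤
            (∫⁻ y in ball x ρ, if t / 2 < f y then ENNReal.ofReal (f y) else 0) +
              ENNReal.ofReal (t / 2) * volume (ball x ρ) := by
          rw [← setLIntegral_const, ← lintegral_add_right _ measurable_const]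
          apply lintegral_mono
          intro y
          simp only [abs_of_nonneg (hf0 y)]
          split_ifs with h
          · exact le_self_add
          · rw [zero_add]
            exact ENNReal.ofReal_le_ofReal (not_lt.1 h)
        have h6 : ENNReal.ofReal t * volume (ball x ρ) =
            ENNReal.ofReal (t / 2) * volume (ball x ρ) + ENNReal.ofReal (t / 2) * volume (ball x ρ) := by
          rw [← add_mul, ← ENNReal.ofReal_add (by positivity) (by positivity)]
          congr 2; ring
        have h7 := h3.trans h5
        rw [h6] at h7
        exact (ENNReal.add_le_add_iff_right (ENNReal.mul_ne_top ENNReal.ofReal_ne_top hvt)).1 h7)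
    rw [lintegral_mul_const' _ _ ENNReal.ofReal_ne_top, ← mul_assoc]
    have e1 : ENNReal.ofReal (t ^ (p - 1)) =
        ENNReal.ofReal (t / 2) * (ENNReal.ofReal 2 * ENNReal.ofReal (t ^ (p - 2))) := by
      rw [← ENNReal.ofReal_mul (by positivity), ← ENNReal.ofReal_mul (by positivity)]
      congr 1
      rw [show p - 1 = (p - 2) + 1 by ring, Real.rpow_add_one ht.ne']
      ring
    rw [e1]
    calc _ = (ENNReal.ofReal (t / 2) * volume {a | t < (φ a : ℝ) ^ (1 / p)}) *
          (ENNReal.ofReal 2 * ENNReal.ofReal (t ^ (p - 2))) := by ring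
      _ ≤ _ := mul_le_mul_left hw _
      _ = _ := by
        rw [ENNReal.ofReal_mul (by positivity)]
        ring
  calc (φ.map ((↑) : ℝ≥0 → ℝ≥0∞)).lintegral volume
      = ∫⁻ a, ENNReal.ofReal (((φ a : ℝ) ^ (1 / p)) ^ p) := by
        rw [← SimpleFunc.lintegral_eq_lintegral]
        apply lintegral_congr
        intro a
        rw [← Real.rpow_mul (by positivity), one_div, inv_mul_cancel₀ hp0.ne', Real.rpow_one]
        simp
    _ = ENNReal.ofReal p * ∫⁻ t in Ioi 0, volume {a | t < (φ a : ℝ) ^ (1 / p)} *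
          ENNReal.ofReal (t ^ (p - 1)) := by
        apply lintegral_rpow_eq_lintegral_meas_lt_mul _ _ _ hp0
        · exact Filter.Eventually.of_forall fun a => by simp only [Pi.zero_apply]; positivity
        · exact ((measurable_coe_nnreal_real.comp φ.measurable).pow_const _).aemeasurable
    _ ≤ ENNReal.ofReal p * ∫⁻ t in Ioi (0 : ℝ), ENNReal.ofReal (5 ^ n * 2) *
        ∫⁻ y, (if t / 2 < f y then ENNReal.ofReal (f y) else 0) * ENNReal.ofReal (t ^ (p - 2)) := by
        gcongr ENNReal.ofReal p * ?_
        exact setLIntegral_mono' measurableSet_Ioi hlev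
    _ = ENNReal.ofReal p * (ENNReal.ofReal (5 ^ n * 2) * ∫⁻ y, ∫⁻ t in Ioi (0 : ℝ),
        (if t / 2 < f y then ENNReal.ofReal (f y) else 0) * ENNReal.ofReal (t ^ (p - 2))) := by
        rw [lintegral_const_mul' _ _ ENNReal.ofReal_ne_top, lintegral_lintegral_swap]
        apply Measurable.aemeasurable
        apply Measurable.mul
        · apply Measurable.ite
          · exact measurableSet_lt (by fun_prop) (by fun_prop)
          · fun_prop
          · fun_prop
        · fun_prop
    _ ≤ ENNReal.ofReal p * (ENNReal.ofReal (5 ^ n * 2) * ∫⁻ y,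
          ENNReal.ofReal (2 ^ (p - 1) / (p - 1)) * ENNReal.ofReal (f y ^ p)) := by
        gcongr with y
        rcases (hf0 y).eq_or_lt with h0 | h0
        · simp [← h0]
        have hset : ∀ t : ℝ, (if t / 2 < f y then ENNReal.ofReal (f y) else 0) * ENNReal.ofReal (t ^ (p - 2)) =
            ENNReal.ofReal (f y) * (Iio (2 * f y)).indicator (fun t => ENNReal.ofReal (t ^ (p - 2))) t := by
          intro t
          by_cases h : t / 2 < f y
          · rw [if_pos h, indicator_of_mem]
            simp only [mem_Iio]; linarith
          · rw [if_neg h, indicator_of_notMem]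
            · simp
            · simp only [mem_Iio]; linarith
        simp_rw [hset]
        rw [lintegral_const_mul' _ _ ENNReal.ofReal_ne_top, lintegral_indicator measurableSet_Iio,
          Measure.restrict_restrict measurableSet_Iio, inter_comm, Ioi_inter_Iio]
        have hint : IntervalIntegrable (fun t : ℝ => t ^ (p - 2)) volume 0 (2 * f y) :=
          intervalIntegral.intervalIntegrable_rpow' (by linarith)
        have hio : IntegrableOn (fun t : ℝ => t ^ (p - 2)) (Ioo 0 (2 * f y)) :=
          ((intervalIntegrable_iff_integrableOn_Ioo_of_le (by positivity)).1 hint)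
        rw [← ofReal_integral_eq_lintegral_ofReal hio
          ((ae_restrict_mem measurableSet_Ioo).mono fun t ht => Real.rpow_nonneg ht.1.le _),
          ← integral_Ioc_eq_integral_Ioo, ← intervalIntegral.integral_of_le (by positivity),
          integral_rpow (Or.inl (by linarith)), ← ENNReal.ofReal_mul h0.le,
          ← ENNReal.ofReal_mul (by positivity)]
        apply ENNReal.ofReal_le_ofReal
        rw [show p - 2 + 1 = p - 1 by ring, Real.zero_rpow hp1.ne', sub_zero,
          Real.mul_rpow (by norm_num) h0.le]
        apply le_of_eq
        have : f y ^ p = f y * f y ^ (p - 1) := by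
          conv_lhs => rw [show p = 1 + (p - 1) by ring, Real.rpow_add h0, Real.rpow_one]
        rw [this]
        ring
    _ = _ := by
        rw [lintegral_const_mul' _ _ ENNReal.ofReal_ne_top, ← mul_assoc, ← mul_assoc,
          ← ENNReal.ofReal_mul (by positivity), ← ENNReal.ofReal_mul (by positivity)]

/-- A point of a ball, avoiding a null set, where `f` is at most its average. -/
lemma exists_pt (n : ℕ) (f : EuclideanSpace ℝ (Fin n) → ℝ≥0∞) (hf : Measurable f)
    (N : Set (EuclideanSpace ℝ (Fin n))) (hN : volume N = 0) (y : EuclideanSpace ℝ (Fin n))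
    (ρ : ℝ) (hρ : 0 < ρ) (b : ℝ≥0∞)
    (h : ∫⁻ z in ball y ρ, f z ≤ b * volume (ball y ρ)) :
    ∃ z ∈ ball y ρ, z ∉ N ∧ f z ≤ b := by
  have hv : volume (ball y ρ \ N) = volume (ball y ρ) := measure_sdiff_null hN
  have hvt : volume (ball y ρ) ≠ ∞ := measure_ball_lt_top.ne
  have hv0 : volume (ball y ρ) ≠ 0 := (measure_ball_pos _ _ hρ).ne'
  obtain ⟨z, hz, hfz⟩ := exists_le_setLAverage (μ := volume) (s := ball y ρ \ N) (f := f)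
    (by rwa [hv]) (by rwa [hv]) hf.aemeasurable
  refine ⟨z, hz.1, hz.2, hfz.trans ?_⟩
  rw [setLAverage_eq, hv]
  apply ENNReal.div_le_of_le_mul
  exact (lintegral_mono_set sdiff_subset).trans h

/-- Passing to the limit at a given point. -/
lemma limit_pt (n : ℕ) (v h : EuclideanSpace ℝ (Fin n) → ℝ) (hv : Continuous v)
    (N : Set (EuclideanSpace ℝ (Fin n)))
    (hH : ∀ y, y ∉ N → ∀ z, z ∉ N → |v y - v z| ≤ ‖y - z‖ * (h y + h z))
    (x : EuclideanSpace ℝ (Fin n)) (b : ℝ)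
    (hx : ∀ ρ : ℝ, 0 < ρ → ∃ z ∈ ball x ρ, z ∉ N ∧ h z ≤ b) :
    ∀ y, y ∉ N → |v y - v x| ≤ ‖y - x‖ * (h y + b) := by
  intro y hy
  choose z hz hzN hzb using fun k : ℕ => hx (1 / ((k : ℝ) + 1)) (by positivity)
  have hlim : Filter.Tendsto z Filter.atTop (nhds x) := by
    rw [tendsto_iff_dist_tendsto_zero]
    exact squeeze_zero (fun _ => dist_nonneg) (fun k => (mem_ball.1 (hz k)).le)
      tendsto_one_div_add_atTop_nhds_zero_nat
  have h1 : Filter.Tendsto (fun k => |v y - v (z k)|) Filter.atTop (nhds |v y - v x|) :=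
    (tendsto_const_nhds.sub ((hv.tendsto x).comp hlim)).abs
  have h2 : Filter.Tendsto (fun k => ‖y - z k‖ * (h y + b)) Filter.atTop
      (nhds (‖y - x‖ * (h y + b))) :=
    (tendsto_const_nhds.sub hlim).norm.mul_const _
  refine le_of_tendsto_of_tendsto' h1 h2 fun k => (hH y hy _ (hzN k)).trans ?_
  gcongr
  exact hzb k

lemma pointwise (n : ℕ) (hn : 1 ≤ n) (v w : EuclideanSpace ℝ (Fin n) → ℝ) (hv : Continuous v)
    (hw : Measurable w) (hw0 : ∀ y, 0 ≤ w y)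
    (N : Set (EuclideanSpace ℝ (Fin n))) (hN : volume N = 0)
    (hH : ∀ y, y ∉ N → ∀ z, z ∉ N → |v y - v z| ≤ ‖y - z‖ * (w y ^ (n + 1) + w z ^ (n + 1)))
    (x : EuclideanSpace ℝ (Fin n))
    (hx : ∀ ρ : ℝ, 0 < ρ → ∫⁻ y in ball x ρ, ENNReal.ofReal (w y ^ n) ≤ volume (ball x ρ)) :
    ∀ y, y ∉ N → |v y - v x| ≤ 32 * 2 ^ n * ‖y - x‖ * (max (w y) 4) ^ n := by
  have hn0 : n ≠ 0 := by omega
  have hbase : ∀ y, y ∉ N → |v y - v x| ≤ ‖y - x‖ * (w y ^ (n + 1) + 1) := by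
    apply limit_pt n v (fun y => w y ^ (n + 1)) hv N hH x 1
    intro ρ hρ
    obtain ⟨z, hz, hzN, hz1⟩ := exists_pt n (fun y => ENNReal.ofReal (w y ^ n)) (by fun_prop) N hN
      x ρ hρ 1 (by simpa using hx ρ hρ)
    refine ⟨z, hz, hzN, ?_⟩
    have h1 : w z ^ n ≤ 1 := by simpa using hz1
    exact pow_le_one₀ (hw0 z) ((pow_le_one_iff_of_nonneg (hw0 z) hn0).1 h1)
  have key : ∀ k : ℕ, ∀ y, y ∉ N → w y ≤ 8 * 2 ^ k →
      |v y - v x| ≤ 32 * 2 ^ n * ‖y - x‖ * (max (w y) 4) ^ n := by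
    have hsmall : ∀ y, y ∉ N → w y ≤ 8 →
        |v y - v x| ≤ 32 * 2 ^ n * ‖y - x‖ * (max (w y) 4) ^ n := by
      intro y hy h8
      refine (hbase y hy).trans ?_
      have h1 : w y ^ (n + 1) ≤ 8 ^ (n + 1) := pow_le_pow_left₀ (hw0 y) h8 _
      have h2 : (4 : ℝ) ^ n ≤ (max (w y) 4) ^ n :=
        pow_le_pow_left₀ (by norm_num) (le_max_right _ _) _
      have h3 : (8 : ℝ) ^ n = 2 ^ n * 4 ^ n := by rw [← mul_pow]; norm_num
      have h4 : (1 : ℝ) ≤ 8 ^ n := one_le_pow₀ (by norm_num)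
      calc ‖y - x‖ * (w y ^ (n + 1) + 1) ≤ ‖y - x‖ * (32 * (2 ^ n * 4 ^ n)) := by
            gcongr
            rw [← h3]
            linarith [h1, pow_succ (8 : ℝ) n]
        _ = 32 * 2 ^ n * ‖y - x‖ * 4 ^ n := by ring
        _ ≤ _ := by gcongr
    intro k
    induction k with
    | zero => intro y hy h; exact hsmall y hy (by simpa using h)
    | succ k ih =>
      intro y hy h
      by_cases h8 : w y ≤ 8
      · exact hsmall y hy h8
      push Not at h8
      by_cases hxy : y = x
      · simp [hxy]
      set d := ‖y - x‖ with hd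
      have hd0 : 0 < d := by rw [hd, norm_pos_iff]; exact sub_ne_zero.2 hxy
      set W := w y with hW
      have hW0 : 0 < W := by linarith
      set ρ := d * (4 / W) with hρ
      have hρ0 : 0 < ρ := by positivity
      have hρd : ρ ≤ d / 2 := by
        rw [hρ, mul_div_assoc', div_le_iff₀ hW0]
        nlinarith
      obtain ⟨z, hz, hzN, hz1⟩ := exists_pt n (fun y => ENNReal.ofReal (w y ^ n)) (by fun_prop) N hN
        y ρ hρ0 (ENNReal.ofReal (((d + ρ) / ρ) ^ n)) (by
          calc ∫⁻ z in ball y ρ, ENNReal.ofReal (w z ^ n)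
              ≤ ∫⁻ z in ball x (d + ρ), ENNReal.ofReal (w z ^ n) := by
                apply lintegral_mono_set
                apply ball_subset_ball'
                rw [dist_eq_norm]; linarith
            _ ≤ volume (ball x (d + ρ)) := hx _ (by positivity)
            _ = _ := by
                rw [vol_ball_eq n x (by positivity : 0 < d + ρ), vol_ball_eq n y hρ0, ← mul_assoc,
                  ← ENNReal.ofReal_mul (by positivity)]
                congr 2
                rw [← mul_pow, div_mul_cancel₀ _ hρ0.ne'])
      have hwz : w z ≤ W / 2 := by
        have h1 : w z ^ n ≤ ((d + ρ) / ρ) ^ n :=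
          (ENNReal.ofReal_le_ofReal_iff (by positivity)).1 hz1
        have h2 : w z ≤ (d + ρ) / ρ := (pow_le_pow_iff_left₀ (hw0 z) (by positivity) hn0).1 h1
        have h3 : (d + ρ) / ρ = W / 4 + 1 := by
          rw [hρ]; field_simp
        linarith
      have hyz : ‖y - z‖ ≤ ρ := by
        have := mem_ball.1 hz
        rw [dist_comm, dist_eq_norm] at this
        exact this.le
      have hzx : ‖z - x‖ ≤ 3 / 2 * d := by
        have : ‖z - x‖ ≤ ‖y - z‖ + ‖y - x‖ := by
          rw [norm_sub_rev y z, show z - x = (z - y) + (y - x) by abel]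
          exact norm_add_le _ _
        linarith
      have hiz := ih z hzN (by rw [pow_succ] at h; linarith)
      have hmax : max (w z) 4 ≤ W / 2 := max_le hwz (by linarith)
      have hm2 : (max (w z) 4) ^ n ≤ W ^ n / 2 := by
        calc (max (w z) 4) ^ n ≤ (W / 2) ^ n :=
              pow_le_pow_left₀ (by positivity) hmax _
          _ = W ^ n / 2 ^ n := by rw [div_pow]
          _ ≤ W ^ n / 2 := by
            gcongr
            exact le_self_pow₀ (by norm_num) hn0
      have hmW : max W 4 = W := max_eq_left (by linarith)
      have h1 : |v y - v z| ≤ 8 * d * W ^ n := by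
        calc |v y - v z| ≤ ‖y - z‖ * (w y ^ (n + 1) + w z ^ (n + 1)) := hH y hy z hzN
          _ ≤ ρ * (W ^ (n + 1) + W ^ (n + 1)) := by
            have := hw0 z
            gcongr
            linarith
          _ = 8 * d * W ^ n := by
            rw [hρ, pow_succ]; field_simp; ring
      have h2 : |v z - v x| ≤ 32 * 2 ^ n * (3 / 2 * d) * (W ^ n / 2) := by
        refine hiz.trans ?_
        gcongr
      rw [hmW]
      have h3 : |v y - v x| ≤ |v y - v z| + |v z - v x| := abs_sub_le _ _ _
      have h4 : (1 : ℝ) ≤ 2 ^ n := one_le_pow₀ (by norm_num)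
      have h5 : 0 < d * W ^ n := by positivity
      nlinarith
  intro y hy
  obtain ⟨k, hk⟩ := pow_unbounded_of_one_lt (w y) (by norm_num : (1 : ℝ) < 2)
  exact key k y hy (by nlinarith [hw0 y])

/-- Integrated form. -/
lemma integrated (n : ℕ) (hn : 1 ≤ n) (v w : EuclideanSpace ℝ (Fin n) → ℝ) (hv : Continuous v)
    (hw : Measurable w) (hw0 : ∀ y, 0 ≤ w y)
    (N : Set (EuclideanSpace ℝ (Fin n))) (hN : volume N = 0)
    (hH : ∀ y, y ∉ N → ∀ z, z ∉ N → |v y - v z| ≤ ‖y - z‖ * (w y ^ (n + 1) + w z ^ (n + 1)))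
    (x : EuclideanSpace ℝ (Fin n))
    (hx : ∀ ρ : ℝ, 0 < ρ → ∫⁻ y in ball x ρ, ENNReal.ofReal (w y ^ n) ≤ volume (ball x ρ))
    (t : ℝ) (ht : 0 < t) :
    ∫⁻ y in ball x t, ENNReal.ofReal |v y - v x| ≤
      ENNReal.ofReal (32 * 2 ^ n * t * (4 ^ n + 1)) * volume (ball x t) := by
  have hae : ∀ᵐ y ∂(volume : Measure (EuclideanSpace ℝ (Fin n))), y ∉ N := measure_eq_zero_iff_ae_notMem.1 hN
  calc ∫⁻ y in ball x t, ENNReal.ofReal |v y - v x|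
      ≤ ∫⁻ y in ball x t, ENNReal.ofReal (32 * 2 ^ n * t) *
          (ENNReal.ofReal (w y ^ n) + ENNReal.ofReal (4 ^ n)) := by
        apply setLIntegral_mono_ae' measurableSet_ball
        filter_upwards [hae] with y hy hyt
        rw [← ENNReal.ofReal_add (pow_nonneg (hw0 y) _) (by positivity),
          ← ENNReal.ofReal_mul (by positivity)]
        apply ENNReal.ofReal_le_ofReal
        refine (pointwise n hn v w hv hw hw0 N hN hH x hx y hy).trans ?_
        have h1 : ‖y - x‖ ≤ t := by rw [← dist_eq_norm]; exact (mem_ball.1 hyt).le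
        have h2 : (max (w y) 4) ^ n ≤ w y ^ n + 4 ^ n := by
          rcases max_cases (w y) 4 with ⟨h, _⟩ | ⟨h, _⟩ <;> rw [h]
          · linarith [pow_pos (by norm_num : (0 : ℝ) < 4) n]
          · linarith [pow_nonneg (hw0 y) n]
        gcongr
    _ = ENNReal.ofReal (32 * 2 ^ n * t) * ((∫⁻ y in ball x t, ENNReal.ofReal (w y ^ n)) +
          ENNReal.ofReal (4 ^ n) * volume (ball x t)) := by
        rw [lintegral_const_mul' _ _ ENNReal.ofReal_ne_top, lintegral_add_right _ measurable_const,
          setLIntegral_const]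
    _ ≤ ENNReal.ofReal (32 * 2 ^ n * t) * (volume (ball x t) +
          ENNReal.ofReal (4 ^ n) * volume (ball x t)) := by
        gcongr
        exact hx t ht
    _ = _ := by
        rw [ENNReal.ofReal_mul (by positivity : (0 : ℝ) ≤ 32 * 2 ^ n * t),
          ENNReal.ofReal_add (by positivity) (by norm_num), ENNReal.ofReal_one]
        ring

/-- Normalized bound for the smooth maximal function. -/
lemma convMax_norm (n : ℕ) (hn : 1 ≤ n)
    (ψ : EuclideanSpace ℝ (Fin n) → ℝ) (hψ : ContDiff ℝ (⊤ : ℕ∞) ψ)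
    (hψsupp : tsupport ψ ⊆ ball 0 1) :
    ∃ C : ℝ, 0 < C ∧ ∀ (v w : EuclideanSpace ℝ (Fin n) → ℝ), ContDiff ℝ (⊤ : ℕ∞) v →
      Measurable w → (∀ y, 0 ≤ w y) →
      ∀ N : Set (EuclideanSpace ℝ (Fin n)), volume N = 0 →
      (∀ y, y ∉ N → ∀ z, z ∉ N → |v y - v z| ≤ ‖y - z‖ * (w y ^ (n + 1) + w z ^ (n + 1))) →
      ∀ x : EuclideanSpace ℝ (Fin n),
      (∀ ρ : ℝ, 0 < ρ → ∫⁻ y in ball x ρ, ENNReal.ofReal (w y ^ n) ≤ volume (ball x ρ)) →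
      ∀ j, convMax n ψ v j x ≤ ENNReal.ofReal C := by
  have hψc : HasCompactSupport ψ :=
    (isCompact_closedBall (0 : EuclideanSpace ℝ (Fin n)) 1).of_isClosed_subset
      (isClosed_tsupport ψ) (hψsupp.trans ball_subset_closedBall)
  obtain ⟨L, hL⟩ := ContDiff.lipschitzWith_of_hasCompactSupport hψc hψ (by simp)
  set V := volume (ball (0 : EuclideanSpace ℝ (Fin n)) 1) with hV
  have hV0 : V ≠ 0 := (vol_unit_pos n).ne'
  have hVt : V ≠ ∞ := vol_unit_fin n
  refine ⟨(L + 1) * (32 * 2 ^ n * (4 ^ n + 1)) * V.toReal, ?_, ?_⟩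
  · have := ENNReal.toReal_pos hV0 hVt
    positivity
  intro v w hv hw hw0 N hN hH x hx j
  refine iSup_le ?_
  rintro ⟨t, ht⟩
  simp only
  set Ψ : EuclideanSpace ℝ (Fin n) → ℝ := fun y => (t⁻¹) ^ n * ψ (t⁻¹ • (x - y)) with hΨ
  set e : EuclideanSpace ℝ (Fin n) := EuclideanSpace.single j 1 with he
  have hΨs : ContDiff ℝ (⊤ : ℕ∞) Ψ := by
    apply contDiff_const.mul
    exact hψ.comp (by fun_prop : ContDiff ℝ (⊤ : ℕ∞) fun y => t⁻¹ • (x - y))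
  have hout : ∀ y, y ∉ ball x t → Ψ =ᶠ[nhds y] 0 := by
    intro y hy
    have h1 : t⁻¹ • (x - y) ∉ tsupport ψ := by
      intro h
      apply hy
      have h2 := hψsupp h
      rw [mem_ball_zero_iff, norm_smul, norm_inv, Real.norm_of_nonneg ht.le, inv_mul_lt_iff₀ ht, mul_one] at h2
      rw [mem_ball, dist_comm, dist_eq_norm]
      exact h2
    have h3 := notMem_tsupport_iff_eventuallyEq.1 h1
    have h4 : Filter.Tendsto (fun y => t⁻¹ • (x - y)) (nhds y) (nhds (t⁻¹ • (x - y))) :=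
      Continuous.tendsto (by fun_prop) y
    filter_upwards [h4.eventually h3] with z hz
    simp [hΨ, hz]
  have hfd0 : ∀ y, y ∉ ball x t → fderiv ℝ Ψ y = 0 := by
    intro y hy
    rw [(hout y hy).fderiv_eq]
    simp
  have hΨc : HasCompactSupport Ψ := by
    apply HasCompactSupport.of_support_subset_isCompact (isCompact_closedBall x t)
    intro y hy
    by_contra hcon
    have := (hout y (fun h => hcon (ball_subset_closedBall h))).eq_of_nhds
    exact hy this
  have hΨL : LipschitzWith (Real.toNNReal ((t⁻¹) ^ n * (L * t⁻¹))) Ψ := by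
    apply LipschitzWith.of_dist_le_mul
    intro y z
    rw [Real.coe_toNNReal _ (by positivity), Real.dist_eq]
    have h1 := hL.dist_le_mul (t⁻¹ • (x - y)) (t⁻¹ • (x - z))
    rw [dist_smul₀, Real.dist_eq, dist_sub_left, norm_inv, Real.norm_of_nonneg ht.le] at h1
    simp only [hΨ]
    rw [← mul_sub, abs_mul, abs_of_nonneg (by positivity)]
    calc _ ≤ (t⁻¹) ^ n * (L * (t⁻¹ * dist y z)) := by gcongr
      _ = _ := by ring
  have hfdb : ∀ y, |fderiv ℝ Ψ y e| ≤ (t⁻¹) ^ n * (L * t⁻¹) := by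
    intro y
    have h1 := norm_fderiv_le_of_lipschitz ℝ (x₀ := y) hΨL
    rw [Real.coe_toNNReal _ (by positivity)] at h1
    have h2 := (fderiv ℝ Ψ y).le_opNorm e
    have h3 : ‖e‖ = 1 := by simp [he]
    rw [h3, mul_one] at h2
    exact h2.trans h1
  have hvd : Differentiable ℝ v := hv.differentiable (by simp)
  have hvc := hv.continuous
  have hfdc : Continuous (fun y => fderiv ℝ Ψ y e) :=
    (hΨs.continuous_fderiv (by simp)).clm_apply continuous_const
  have hfvc : Continuous (fun y => fderiv ℝ (fun y => v y - v x) y e) :=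
    ((hv.sub contDiff_const).continuous_fderiv (by simp)).clm_apply continuous_const
  have hibp : ∫ y, (v y - v x) * fderiv ℝ Ψ y e =
      - ∫ y, fderiv ℝ (fun y => v y - v x) y e * Ψ y := by
    apply integral_mul_fderiv_eq_neg_fderiv_mul_of_integrable
    · exact (hfvc.mul hΨs.continuous).integrable_of_hasCompactSupport hΨc.mul_left
    · exact ((hvc.sub continuous_const).mul hfdc).integrable_of_hasCompactSupport
        (hΨc.fderiv_apply (𝕜 := ℝ) e).mul_left
    · exact ((hvc.sub continuous_const).mul hΨs.continuous).integrable_of_hasCompactSupport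
        hΨc.mul_left
    · intro y _
      exact (hvd y).sub_const _
    · intro y _
      exact hΨs.differentiable (by simp) y
  have heq : ∫ y, pderivIdx n j v y * Ψ y = - ∫ y, (v y - v x) * fderiv ℝ Ψ y e := by
    rw [hibp, neg_neg]
    simp only [fderiv_sub_const]
    rfl
  change ENNReal.ofReal |∫ y, pderivIdx n j v y * Ψ y| ≤ _
  rw [heq, abs_neg]
  have hfin := integrated n hn v w hvc hw hw0 N hN hH x hx t ht
  calc ENNReal.ofReal |∫ y, (v y - v x) * fderiv ℝ Ψ y e|
      ≤ ∫⁻ y, ENNReal.ofReal |(v y - v x) * fderiv ℝ Ψ y e| := by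
        have := enorm_integral_le_lintegral_enorm (μ := volume) (fun y => (v y - v x) * fderiv ℝ Ψ y e)
        simpa only [← ofReal_norm, Real.norm_eq_abs] using this
    _ ≤ ∫⁻ y, (ball x t).indicator (fun y => ENNReal.ofReal ((t⁻¹) ^ n * (L * t⁻¹)) *
          ENNReal.ofReal |v y - v x|) y := by
        apply lintegral_mono
        intro y
        by_cases hy : y ∈ ball x t
        · rw [indicator_of_mem hy, ← ENNReal.ofReal_mul (by positivity)]
          apply ENNReal.ofReal_le_ofReal
          rw [abs_mul, mul_comm]
          gcongr
          exact hfdb y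
        · simp [hfd0 y hy]
    _ = ENNReal.ofReal ((t⁻¹) ^ n * (L * t⁻¹)) * ∫⁻ y in ball x t, ENNReal.ofReal |v y - v x| := by
        rw [lintegral_indicator measurableSet_ball, lintegral_const_mul' _ _ ENNReal.ofReal_ne_top]
    _ ≤ ENNReal.ofReal ((t⁻¹) ^ n * (L * t⁻¹)) *
          (ENNReal.ofReal (32 * 2 ^ n * t * (4 ^ n + 1)) * volume (ball x t)) := by gcongr
    _ = ENNReal.ofReal (L * (32 * 2 ^ n * (4 ^ n + 1)) * V.toReal) := by
        rw [vol_ball_eq n x ht, ← hV, ← ENNReal.ofReal_toReal hVt,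
          ← ENNReal.ofReal_mul (by positivity), ← ENNReal.ofReal_mul (by positivity),
          ← ENNReal.ofReal_mul (by positivity), ENNReal.toReal_ofReal (by positivity)]
        congr 1
        rw [inv_pow]
        field_simp
    _ ≤ _ := by
        apply ENNReal.ofReal_le_ofReal
        gcongr
        linarith

lemma convMax_const_mul (n : ℕ) (ψ v : EuclideanSpace ℝ (Fin n) → ℝ) (hv : Differentiable ℝ v)
    (j : Fin n) (x : EuclideanSpace ℝ (Fin n)) (a : ℝ) (ha : 0 ≤ a) :
    convMax n ψ (fun y => a * v y) j x = ENNReal.ofReal a * convMax n ψ v j x := by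
  unfold convMax
  rw [ENNReal.mul_iSup]
  congr 1
  ext t
  rw [← ENNReal.ofReal_mul ha]
  congr 1
  rw [← abs_of_nonneg ha, ← abs_mul, abs_of_nonneg ha, ← integral_const_mul]
  congr 2
  ext y
  have : pderivIdx n j (fun y => a * v y) y = a * pderivIdx n j v y := by
    unfold pderivIdx
    rw [fderiv_const_mul (hv y)]
    simp
  rw [this]
  ring

/-- Bound of the smooth maximal function by the maximal function of a Hajlasz gradient. -/
lemma convMax_bound (n : ℕ) (hn : 1 ≤ n)
    (ψ : EuclideanSpace ℝ (Fin n) → ℝ) (hψ : ContDiff ℝ (⊤ : ℕ∞) ψ)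
    (hψsupp : tsupport ψ ⊆ ball 0 1) :
    ∃ C : ℝ, 0 < C ∧ ∀ (v h : EuclideanSpace ℝ (Fin n) → ℝ), ContDiff ℝ (⊤ : ℕ∞) v →
      Measurable h → (∀ y, 0 ≤ h y) →
      ∀ N : Set (EuclideanSpace ℝ (Fin n)), volume N = 0 →
      (∀ y, y ∉ N → ∀ z, z ∉ N → |v y - v z| ≤ ‖y - z‖ * (h y + h z)) →
      ∀ (x : EuclideanSpace ℝ (Fin n)) j,
      convMax n ψ v j x ^ ((n : ℝ) / (n + 1)) ≤
        ENNReal.ofReal C * hlMax n (fun y => h y ^ ((n : ℝ) / (n + 1))) x := by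
  obtain ⟨C, hC, hmain⟩ := convMax_norm n hn ψ hψ hψsupp
  set s : ℝ := (n : ℝ) / (n + 1) with hs
  have hn' : (0 : ℝ) < n := by exact_mod_cast hn
  have hs0 : 0 < s := by positivity
  refine ⟨C ^ s, by positivity, ?_⟩
  intro v h hv hh hh0 N hN hH x j
  set M := hlMax n (fun y => h y ^ s) x with hM
  by_cases hMt : M = ∞
  · rw [hMt, ENNReal.mul_top]
    · exact le_top
    · simp only [ne_eq, ENNReal.ofReal_eq_zero, not_le]; positivity
  -- the bound for each `b > 0` above the maximal function
  have key : ∀ b : ℝ, 0 < b → M ≤ ENNReal.ofReal b →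
      convMax n ψ v j x ^ s ≤ ENNReal.ofReal (C ^ s) * ENNReal.ofReal b := by
    intro b hb hMb
    set A : ℝ := b ^ (1 / s) with hA
    have hA0 : 0 < A := by positivity
    have hAs : A ^ s = b := by
      rw [hA, ← Real.rpow_mul hb.le, one_div, inv_mul_cancel₀ hs0.ne', Real.rpow_one]
    set w : EuclideanSpace ℝ (Fin n) → ℝ := fun y => (A⁻¹ * h y) ^ (1 / ((n : ℝ) + 1)) with hw
    have hpos : ∀ y, 0 ≤ A⁻¹ * h y := fun y => mul_nonneg (by positivity) (hh0 y)
    have hw1 : ∀ y, w y ^ (n + 1) = A⁻¹ * h y := by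
      intro y
      rw [hw, ← Real.rpow_natCast, ← Real.rpow_mul (hpos y)]
      push_cast
      rw [one_div, inv_mul_cancel₀ (by positivity), Real.rpow_one]
    have hw2 : ∀ y, w y ^ n = b⁻¹ * h y ^ s := by
      intro y
      rw [hw, ← Real.rpow_natCast, ← Real.rpow_mul (hpos y),
        show 1 / ((n : ℝ) + 1) * n = s by rw [hs]; ring, Real.mul_rpow (by positivity) (hh0 y),
        Real.inv_rpow hA0.le, hAs]
    have h1 := hmain (fun y => A⁻¹ * v y) w (contDiff_const.mul hv)
      ((hh.const_mul _).pow_const _) (fun y => Real.rpow_nonneg (hpos y) _) N hN (by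
        intro y hy z hz
        rw [hw1, hw1, ← mul_sub, abs_mul, abs_of_pos (by positivity : 0 < A⁻¹), ← mul_add]
        have := hH y hy z hz
        calc _ ≤ A⁻¹ * (‖y - z‖ * (h y + h z)) := by gcongr
          _ = _ := by ring) x (by
        intro ρ hρ
        have hvt : volume (ball x ρ) ≠ ∞ := measure_ball_lt_top.ne
        have hv0 : volume (ball x ρ) ≠ 0 := (measure_ball_pos _ _ hρ).ne'
        have h2 : (volume (ball x ρ))⁻¹ * ∫⁻ y in ball x ρ, ENNReal.ofReal |h y ^ s| ≤
            ENNReal.ofReal b :=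
          (le_iSup (fun r : {s : ℝ // 0 < s} => (volume (ball x r.1))⁻¹ *
            ∫⁻ y in ball x r.1, ENNReal.ofReal |h y ^ s|) ⟨ρ, hρ⟩).trans hMb
        rw [mul_comm, ← div_eq_mul_inv, ENNReal.div_le_iff hv0 hvt] at h2
        calc ∫⁻ y in ball x ρ, ENNReal.ofReal (w y ^ n)
            = ∫⁻ y in ball x ρ, ENNReal.ofReal b⁻¹ * ENNReal.ofReal |h y ^ s| := by
              congr 1
              ext y
              rw [hw2, abs_of_nonneg (Real.rpow_nonneg (hh0 y) _), ENNReal.ofReal_mul (by positivity)]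
          _ = ENNReal.ofReal b⁻¹ * ∫⁻ y in ball x ρ, ENNReal.ofReal |h y ^ s| :=
              lintegral_const_mul' _ _ ENNReal.ofReal_ne_top
          _ ≤ ENNReal.ofReal b⁻¹ * (ENNReal.ofReal b * volume (ball x ρ)) := by gcongr
          _ = volume (ball x ρ) := by
              rw [← mul_assoc, ← ENNReal.ofReal_mul (by positivity), inv_mul_cancel₀ hb.ne',
                ENNReal.ofReal_one, one_mul]) j
    have h3 : convMax n ψ v j x = ENNReal.ofReal A * convMax n ψ (fun y => A⁻¹ * v y) j x := by
      rw [convMax_const_mul n ψ v (hv.differentiable (by simp)) j x A⁻¹ (by positivity),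
        ← mul_assoc, ← ENNReal.ofReal_mul hA0.le, mul_inv_cancel₀ hA0.ne', ENNReal.ofReal_one,
        one_mul]
    calc convMax n ψ v j x ^ s ≤ (ENNReal.ofReal A * ENNReal.ofReal C) ^ s := by
          rw [h3]; gcongr
      _ = ENNReal.ofReal (C ^ s) * ENNReal.ofReal b := by
          rw [ENNReal.mul_rpow_of_nonneg _ _ hs0.le, ENNReal.ofReal_rpow_of_pos hA0, hAs,
            ENNReal.ofReal_rpow_of_pos hC, mul_comm]
  apply ENNReal.le_of_forall_pos_le_add
  intro ε hε _
  have hCs : 0 < C ^ s := by positivity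
  have h1 := key (M.toReal + ε / C ^ s) (by positivity) (by
    rw [ENNReal.ofReal_add (by positivity) (by positivity), ENNReal.ofReal_toReal hMt]
    exact le_self_add)
  refine h1.trans (le_of_eq ?_)
  rw [ENNReal.ofReal_add (by positivity) (by positivity), ENNReal.ofReal_toReal hMt, mul_add,
    ← ENNReal.ofReal_mul hCs.le, mul_div_cancel₀ _ hCs.ne', ENNReal.ofReal_coe_nnreal]

/-- `L^q` bound of the smooth maximal function. -/
lemma convMax_Lq (n : ℕ) (hn : 1 ≤ n) (q : ℝ) (hq1 : (n : ℝ) / (n + 1) < q)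
    (ψ : EuclideanSpace ℝ (Fin n) → ℝ) (hψ : ContDiff ℝ (⊤ : ℕ∞) ψ)
    (hψsupp : tsupport ψ ⊆ ball 0 1) :
    ∃ C : ℝ, 0 < C ∧ ∀ (v h : EuclideanSpace ℝ (Fin n) → ℝ), ContDiff ℝ (⊤ : ℕ∞) v →
      Measurable h → (∀ y, 0 ≤ h y) →
      ∀ N : Set (EuclideanSpace ℝ (Fin n)), volume N = 0 →
      (∀ y, y ∉ N → ∀ z, z ∉ N → |v y - v z| ≤ ‖y - z‖ * (h y + h z)) →
      ∀ j, ∫⁻ x, convMax n ψ v j x ^ q ≤ ENNReal.ofReal C * ∫⁻ x, ENNReal.ofReal (h x ^ q) := by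
  obtain ⟨C, hC, hmain⟩ := convMax_bound n hn ψ hψ hψsupp
  set s : ℝ := (n : ℝ) / (n + 1) with hs
  have hn' : (0 : ℝ) < n := by exact_mod_cast hn
  have hs0 : 0 < s := by positivity
  have hp : 1 < q / s := by rw [one_lt_div hs0]; exact hq1
  obtain ⟨D, hD, hst⟩ := strong_type n hn (q / s) hp
  refine ⟨C ^ (q / s) * D, by positivity, ?_⟩
  intro v h hv hh hh0 N hN hH j
  have hsq : s * (q / s) = q := by field_simp
  calc ∫⁻ x, convMax n ψ v j x ^ q
      = ∫⁻ x, (convMax n ψ v j x ^ s) ^ (q / s) := by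
        simp_rw [← ENNReal.rpow_mul, hsq]
    _ ≤ ∫⁻ x, ENNReal.ofReal (C ^ (q / s)) * hlMax n (fun y => h y ^ s) x ^ (q / s) := by
        apply lintegral_mono
        intro x
        simp only
        rw [← ENNReal.ofReal_rpow_of_pos hC, ← ENNReal.mul_rpow_of_nonneg _ _ (by linarith)]
        gcongr
        exact hmain v h hv hh hh0 N hN hH x j
    _ = ENNReal.ofReal (C ^ (q / s)) * ∫⁻ x, hlMax n (fun y => h y ^ s) x ^ (q / s) :=
        lintegral_const_mul' _ _ ENNReal.ofReal_ne_top
    _ ≤ ENNReal.ofReal (C ^ (q / s)) * (ENNReal.ofReal D *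
          ∫⁻ x, ENNReal.ofReal ((h x ^ s) ^ (q / s))) := by
        gcongr
        exact hst _ (hh.pow_const _) (fun x => Real.rpow_nonneg (hh0 x) _)
    _ = _ := by
        rw [← mul_assoc, ← ENNReal.ofReal_mul (by positivity)]
        congr 2
        ext x
        rw [← Real.rpow_mul (hh0 x), hsq]

set_option maxHeartbeats 2000000 in
/-- **Lemma 4.3.** If `K ⊆ B` is compact with `cap_q(K;2B) ≥ c r^{n-q}` and `u` is a
smooth compactly supported function vanishing on `K`, then any Hajlasz gradient `g` of
`u` satisfies `|u(x)| ≤ C r (M(g^q)(x))^{1/q}` on the closed ball `cl(B)`. -/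
theorem capacity_maximal_estimate
    (n : ℕ) (hn : 1 ≤ n) (q : ℝ) (hq1 : (n : ℝ) / (n + 1) < q) (hq2 : q ≤ 1)
    (c : ℝ) (hc : 0 < c)
    (ψ : EuclideanSpace ℝ (Fin n) → ℝ) (hψ : ContDiff ℝ (⊤ : ℕ∞) ψ)
    (hψsupp : tsupport ψ ⊆ ball 0 1) (hψint : ∫ x, ψ x = 1) :
    ∃ C : ℝ, 0 < C ∧
      ∀ (x₀ : EuclideanSpace ℝ (Fin n)) (r : ℝ), 0 < r →
        ∀ K : Set (EuclideanSpace ℝ (Fin n)), IsCompact K → K ⊆ ball x₀ r →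
          ENNReal.ofReal (c * r ^ ((n : ℝ) - q)) ≤
            hardyCap n ψ q K (ball x₀ (2 * r)) →
          ∀ u : EuclideanSpace ℝ (Fin n) → ℝ,
            ContDiff ℝ (⊤ : ℕ∞) u → HasCompactSupport u → (∀ x ∈ K, u x = 0) →
            ∀ g : EuclideanSpace ℝ (Fin n) → ℝ, IsHajlaszGradientOn n u g univ →
              ∀ x ∈ closedBall x₀ r,
                ENNReal.ofReal |u x| ≤
                  ENNReal.ofReal (C * r) *
                    (hlMax n (fun y => g y ^ q) x) ^ (1 / q) := by
  obtain ⟨D, hD, hLq⟩ := convMax_Lq n hn q hq1 ψ hψ hψsupp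
  have hn' : (0 : ℝ) < n := by exact_mod_cast hn
  have hq0 : 0 < q := lt_trans (by positivity) hq1
  -- the cutoff
  let η : ContDiffBump (0 : EuclideanSpace ℝ (Fin n)) := ⟨1, 3 / 2, by norm_num, by norm_num⟩
  obtain ⟨L, hL⟩ := ContDiff.lipschitzWith_of_hasCompactSupport η.hasCompactSupport
    (η.contDiff (n := (⊤ : ℕ∞))) (by simp)
  set V := volume (ball (0 : EuclideanSpace ℝ (Fin n)) 1) with hV
  have hV0 : V ≠ 0 := (vol_unit_pos n).ne'
  have hVt : V ≠ ∞ := vol_unit_fin n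
  have hVp : 0 < V.toReal := ENNReal.toReal_pos hV0 hVt
  set C1 : ℝ := 1 + 3 * L with hC1
  have hC1p : 0 < C1 := by positivity
  set Q : ℝ := n * (D * (C1 ^ q * (2 * (3 ^ n * V.toReal)))) with hQ
  have hQp : 0 < Q := by positivity
  refine ⟨(Q / c) ^ (1 / q), by positivity, ?_⟩
  intro x₀ r hr K hK hKB hcap u hu huc huK g hg x hx
  obtain ⟨hgm, hg0, N, hN, hgN⟩ := hg
  have hgN' : ∀ y, y ∉ N → ∀ z, z ∉ N → |u y - u z| ≤ ‖y - z‖ * (g y + g z) :=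
    fun y hy z hz => hgN y ⟨mem_univ _, hy⟩ z ⟨mem_univ _, hz⟩
  set M := hlMax n (fun y => g y ^ q) x with hM
  have hCr : 0 < (Q / c) ^ (1 / q) * r := by positivity
  by_cases hMt : M = ∞
  · rw [hMt, ENNReal.top_rpow_of_pos (by positivity), ENNReal.mul_top]
    · exact le_top
    · simpa using hCr
  set a := u x with ha
  by_cases ha0 : a = 0
  · simp [ha0]
  have hap : 0 < |a| := abs_pos.2 ha0
  set G : ℝ := M.toReal ^ (1 / q) with hG
  have hG0 : 0 ≤ G := by positivity
  have hGq : G ^ q = M.toReal := by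
    rw [hG, ← Real.rpow_mul (by positivity), one_div, inv_mul_cancel₀ hq0.ne', Real.rpow_one]
  have hGM : M = ENNReal.ofReal (G ^ q) := by rw [hGq, ENNReal.ofReal_toReal hMt]
  have hball : ∀ ρ : ℝ, 0 < ρ → ∫⁻ y in ball x ρ, ENNReal.ofReal (g y ^ q) ≤
      ENNReal.ofReal (G ^ q) * volume (ball x ρ) := by
    intro ρ hρ
    have hvt : volume (ball x ρ) ≠ ∞ := measure_ball_lt_top.ne
    have hv0 : volume (ball x ρ) ≠ 0 := (measure_ball_pos _ _ hρ).ne'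
    have h2 : (volume (ball x ρ))⁻¹ * ∫⁻ y in ball x ρ, ENNReal.ofReal |g y ^ q| ≤ M :=
      le_iSup (fun r : {s : ℝ // 0 < s} => (volume (ball x r.1))⁻¹ *
        ∫⁻ y in ball x r.1, ENNReal.ofReal |g y ^ q|) ⟨ρ, hρ⟩
    rw [mul_comm, ← div_eq_mul_inv, ENNReal.div_le_iff hv0 hvt, hGM] at h2
    simpa only [abs_of_nonneg (Real.rpow_nonneg (hg0 _) q)] using h2
  -- the estimate at `x`
  have hxy : ∀ y, y ∉ N → |u y - a| ≤ ‖y - x‖ * (g y + G) := by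
    apply limit_pt n u g hu.continuous N hgN' x G
    intro ρ hρ
    obtain ⟨z, hz, hzN, hz1⟩ := exists_pt n (fun y => ENNReal.ofReal (g y ^ q))
      (hgm.pow_const _).ennreal_ofReal N hN x ρ hρ _ (hball ρ hρ)
    refine ⟨z, hz, hzN, ?_⟩
    have h1 := (ENNReal.ofReal_le_ofReal_iff (by positivity)).1 hz1
    exact (Real.rpow_le_rpow_iff (hg0 z) hG0 hq0).1 h1
  have hxx₀ : dist x x₀ ≤ r := mem_closedBall.1 hx
  have hxy3 : ∀ y, y ∉ N → y ∈ ball x₀ (2 * r) → |u y - a| ≤ 3 * r * (g y + G) := by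
    intro y hy hyB
    refine (hxy y hy).trans ?_
    have h1 : ‖y - x‖ ≤ 3 * r := by
      rw [← dist_eq_norm]
      have := dist_triangle_right y x x₀
      have := mem_ball.1 hyB
      linarith
    have := hg0 y
    gcongr
  -- scaled cutoff
  set θ : EuclideanSpace ℝ (Fin n) → ℝ := fun y => η (r⁻¹ • (y - x₀)) with hθ
  have hθs : ContDiff ℝ (⊤ : ℕ∞) θ :=
    (η.contDiff (n := (⊤ : ℕ∞))).comp (by fun_prop : ContDiff ℝ (⊤ : ℕ∞) fun y => r⁻¹ • (y - x₀))
  have hnorm : ∀ y, ‖r⁻¹ • (y - x₀)‖ = dist y x₀ / r := by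
    intro y
    rw [norm_smul, norm_inv, Real.norm_of_nonneg hr.le, dist_eq_norm, inv_mul_eq_div]
  have hθ1 : ∀ y ∈ ball x₀ r, θ y = 1 := by
    intro y hy
    apply η.one_of_mem_closedBall
    rw [mem_closedBall_zero_iff, hnorm]
    change dist y x₀ / r ≤ 1
    rw [div_le_one hr]
    exact (mem_ball.1 hy).le
  have hθ0 : ∀ y, y ∉ closedBall x₀ (3 / 2 * r) → θ y = 0 := by
    intro y hy
    apply η.zero_of_le_dist
    rw [dist_zero_right, hnorm]
    change 3 / 2 ≤ dist y x₀ / r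
    rw [le_div_iff₀ hr]
    rw [mem_closedBall, not_le] at hy
    exact hy.le
  have hsubB : closedBall x₀ (3 / 2 * r) ⊆ ball x₀ (2 * r) :=
    closedBall_subset_ball (by linarith)
  have hθL : ∀ y z, |θ y - θ z| ≤ L / r * ‖y - z‖ := by
    intro y z
    have h1 := hL.dist_le_mul (r⁻¹ • (y - x₀)) (r⁻¹ • (z - x₀))
    rw [dist_smul₀, Real.dist_eq, dist_sub_right, norm_inv, Real.norm_of_nonneg hr.le,
      dist_eq_norm] at h1
    refine h1.trans (le_of_eq ?_)
    field_simp
  have hθb : ∀ y, |θ y| ≤ 1 := by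
    intro y
    rw [abs_of_nonneg η.nonneg]
    exact η.le_one
  -- test function
  set φ : EuclideanSpace ℝ (Fin n) → ℝ := fun y => θ y * (1 - u y / a) with hφ
  have hφs : ContDiff ℝ (⊤ : ℕ∞) φ := hθs.mul (contDiff_const.sub (hu.div_const a))
  have hφsup : Function.support φ ⊆ closedBall x₀ (3 / 2 * r) := by
    intro y hy
    by_contra hcon
    apply hy
    simp [hφ, hθ0 y hcon]
  have hφc : HasCompactSupport φ :=
    HasCompactSupport.of_support_subset_isCompact (isCompact_closedBall _ _) hφsup
  have hφt : tsupport φ ⊆ ball x₀ (2 * r) :=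
    (closure_minimal hφsup isClosed_closedBall).trans hsubB
  have hφK : ∀ y ∈ K, 1 ≤ φ y := by
    intro y hy
    simp [hφ, hθ1 y (hKB hy), huK y hy]
  -- its Hajlasz gradient
  set h : EuclideanSpace ℝ (Fin n) → ℝ :=
    (ball x₀ (2 * r)).indicator (fun y => C1 / |a| * (g y + G)) with hh
  have hhm : Measurable h :=
    ((hgm.add_const G).const_mul _).indicator measurableSet_ball
  have hh0 : ∀ y, 0 ≤ h y := by
    intro y
    apply indicator_nonneg
    intro z _
    have := hg0 z
    positivity
  have hone : ∀ y, y ∉ N → y ∈ ball x₀ (2 * r) → ∀ z, z ∉ ball x₀ (2 * r) →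
      |φ y - φ z| ≤ ‖y - z‖ * (h y + h z) := by
    intro y hy hyB z hzB
    have hθz : θ z = 0 := hθ0 z (fun hc => hzB (hsubB hc))
    have e1 : φ y - φ z = -((θ y - θ z) * (u y - a)) / a := by
      simp only [hφ, hθz]
      field_simp
      ring
    have e2 : h z = 0 := indicator_of_notMem hzB _
    have e3 : h y = C1 / |a| * (g y + G) := indicator_of_mem hyB _
    have hgy := hg0 y
    rw [e1, abs_div, abs_neg, abs_mul, e2, e3, add_zero, div_le_iff₀ hap]
    calc |θ y - θ z| * |u y - a| ≤ (L / r * ‖y - z‖) * (3 * r * (g y + G)) := by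
          gcongr
          · exact hθL y z
          · exact hxy3 y hy hyB
      _ = ‖y - z‖ * ((3 * L) * (g y + G)) := by field_simp
      _ ≤ ‖y - z‖ * (C1 * (g y + G)) := by
          gcongr
          linarith
      _ = ‖y - z‖ * (C1 / |a| * (g y + G)) * |a| := by field_simp
  have hφH : ∀ y, y ∉ N → ∀ z, z ∉ N → |φ y - φ z| ≤ ‖y - z‖ * (h y + h z) := by
    intro y hy z hz
    by_cases hyB : y ∈ ball x₀ (2 * r)
    · by_cases hzB : z ∈ ball x₀ (2 * r)
      · have e1 : φ y - φ z = -(θ y * (u y - u z) + (θ y - θ z) * (u z - a)) / a := by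
          simp only [hφ]
          field_simp
          ring
        have e2 : h z = C1 / |a| * (g z + G) := indicator_of_mem hzB _
        have e3 : h y = C1 / |a| * (g y + G) := indicator_of_mem hyB _
        have hgy := hg0 y
        have hgz := hg0 z
        rw [e1, abs_div, abs_neg, e2, e3, div_le_iff₀ hap]
        calc |θ y * (u y - u z) + (θ y - θ z) * (u z - a)|
            ≤ |θ y| * |u y - u z| + |θ y - θ z| * |u z - a| := by
              rw [← abs_mul, ← abs_mul]; exact abs_add_le _ _
          _ ≤ 1 * (‖y - z‖ * (g y + g z)) + (L / r * ‖y - z‖) * (3 * r * (g z + G)) := by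
              gcongr
              · exact hθb y
              · exact hgN' y hy z hz
              · exact hθL y z
              · exact hxy3 z hz hzB
          _ = ‖y - z‖ * (1 * (g y + g z) + 3 * L * (g z + G)) := by field_simp
          _ ≤ ‖y - z‖ * (C1 * (g y + G) + C1 * (g z + G)) := by
              refine mul_le_mul_of_nonneg_left ?_ (norm_nonneg _)
              have hL0 : (0 : ℝ) ≤ L := L.2
              have := mul_nonneg hL0 hgy
              have := mul_nonneg hL0 hG0
              rw [hC1]
              nlinarith
          _ = ‖y - z‖ * (C1 / |a| * (g y + G) + C1 / |a| * (g z + G)) * |a| := by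
              field_simp
      · exact hone y hy hyB z hzB
    · by_cases hzB : z ∈ ball x₀ (2 * r)
      · rw [abs_sub_comm, norm_sub_rev, add_comm]
        exact hone z hz hzB y hyB
      · have e1 : φ y = 0 := by simp [hφ, hθ0 y (fun hc => hyB (hsubB hc))]
        have e2 : φ z = 0 := by simp [hφ, hθ0 z (fun hc => hzB (hsubB hc))]
        rw [e1, e2, sub_zero, abs_zero]
        have := hh0 y
        have := hh0 z
        positivity
  -- energy estimate
  have hhq : ∫⁻ y, ENNReal.ofReal (h y ^ q) ≤
      ENNReal.ofReal ((C1 / |a|) ^ q * (2 * (3 ^ n * V.toReal)) * (r ^ n * G ^ q)) := by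
    calc ∫⁻ y, ENNReal.ofReal (h y ^ q)
        ≤ ∫⁻ y, (ball x (3 * r)).indicator (fun y => ENNReal.ofReal ((C1 / |a|) ^ q) *
            (ENNReal.ofReal (g y ^ q) + ENNReal.ofReal (G ^ q))) y := by
          apply lintegral_mono
          intro y
          simp only
          by_cases hyB : y ∈ ball x₀ (2 * r)
          · have hy3 : y ∈ ball x (3 * r) := by
              have h1 := dist_triangle_right y x x₀
              have h2 := mem_ball.1 hyB
              rw [mem_ball]
              linarith
            have hgy := hg0 y
            rw [indicator_of_mem hy3, hh, indicator_of_mem hyB,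
              ← ENNReal.ofReal_add (by positivity) (by positivity),
              ← ENNReal.ofReal_mul (by positivity), Real.mul_rpow (by positivity) (by positivity)]
            apply ENNReal.ofReal_le_ofReal
            gcongr
            exact Real.rpow_add_le_add_rpow hgy hG0 hq0.le hq2
          · rw [hh, indicator_of_notMem hyB, Real.zero_rpow hq0.ne', ENNReal.ofReal_zero]
            exact bot_le
      _ = ENNReal.ofReal ((C1 / |a|) ^ q) * ((∫⁻ y in ball x (3 * r), ENNReal.ofReal (g y ^ q)) +
            ENNReal.ofReal (G ^ q) * volume (ball x (3 * r))) := by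
          rw [lintegral_indicator measurableSet_ball, lintegral_const_mul' _ _ ENNReal.ofReal_ne_top,
            lintegral_add_right _ measurable_const, setLIntegral_const]
      _ ≤ ENNReal.ofReal ((C1 / |a|) ^ q) * (ENNReal.ofReal (G ^ q) * volume (ball x (3 * r)) +
            ENNReal.ofReal (G ^ q) * volume (ball x (3 * r))) := by
          gcongr
          exact hball _ (by positivity)
      _ = _ := by
          rw [vol_ball_eq n x (by positivity), ← hV, ← ENNReal.ofReal_toReal hVt,
            ENNReal.toReal_ofReal hVp.le,
            ← ENNReal.ofReal_mul (by positivity), ← ENNReal.ofReal_mul (by positivity),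
            ← ENNReal.ofReal_add (by positivity) (by positivity),
            ← ENNReal.ofReal_mul (by positivity)]
          congr 1
          rw [mul_pow]
          ring
  have hcapφ : hardyCap n ψ q K (ball x₀ (2 * r)) ≤ ∑ j : Fin n, ∫⁻ x, convMax n ψ φ j x ^ q :=
    sInf_le ⟨φ, hφs, hφc, hφt, hφK, rfl⟩
  have hsum : ∑ j : Fin n, ∫⁻ x, convMax n ψ φ j x ^ q ≤
      ENNReal.ofReal (n * (D * ((C1 / |a|) ^ q * (2 * (3 ^ n * V.toReal)) * (r ^ n * G ^ q)))) := by
    calc ∑ j : Fin n, ∫⁻ x, convMax n ψ φ j x ^ q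
        ≤ ∑ j : Fin n, ENNReal.ofReal D *
          ENNReal.ofReal ((C1 / |a|) ^ q * (2 * (3 ^ n * V.toReal)) * (r ^ n * G ^ q)) := by
          apply Finset.sum_le_sum
          intro j _
          refine (hLq φ h hφs hhm hh0 N hN hφH j).trans ?_
          gcongr
      _ = _ := by
          rw [Finset.sum_const, Finset.card_univ, Fintype.card_fin, nsmul_eq_mul,
            ← ENNReal.ofReal_mul hD.le, ENNReal.ofReal_mul (by positivity : (0 : ℝ) ≤ n),
            ENNReal.ofReal_natCast]
  have hfin := (ENNReal.ofReal_le_ofReal_iff (by positivity)).1 ((hcap.trans hcapφ).trans hsum)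
  -- conclusion
  have hfin2 : |a| ^ q ≤ Q / c * (r * G) ^ q := by
    have haq : 0 < |a| ^ q := by positivity
    have hrq : 0 < r ^ q := by positivity
    have hrn : 0 < r ^ n := by positivity
    rw [Real.rpow_sub hr, Real.rpow_natCast, Real.div_rpow hC1p.le hap.le] at hfin
    rw [Real.mul_rpow hr.le hG0]
    have e1 : (n : ℝ) * (D * (C1 ^ q / |a| ^ q * (2 * (3 ^ n * V.toReal)) * (r ^ n * G ^ q))) =
        Q * (r ^ n * G ^ q) / |a| ^ q := by
      rw [hQ]; field_simp
    rw [e1, le_div_iff₀ haq] at hfin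
    have e2 : c * (r ^ n / r ^ q) * |a| ^ q = (c * r ^ n / r ^ q) * |a| ^ q := by ring
    rw [e2, ← le_div_iff₀' (by positivity)] at hfin
    refine hfin.trans (le_of_eq ?_)
    field_simp
  have hfin3 : |a| ≤ (Q / c) ^ (1 / q) * r * G := by
    have h1 := Real.rpow_le_rpow (by positivity) hfin2 (by positivity : 0 ≤ 1 / q)
    rw [Real.mul_rpow (by positivity) (by positivity), ← Real.rpow_mul hap.le,
      ← Real.rpow_mul (by positivity), mul_one_div_cancel hq0.ne', Real.rpow_one, Real.rpow_one] at h1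
    linarith
  have hMG : M ^ (1 / q) = ENNReal.ofReal G := by
    rw [hG, ← ENNReal.ofReal_rpow_of_nonneg (by positivity) (by positivity),
      ENNReal.ofReal_toReal hMt]
  rw [hMG, ← ENNReal.ofReal_mul hCr.le]
  exact ENNReal.ofReal_le_ofReal hfin3
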